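/- Let f, g : ℝⁿ → [0,∞) be upper semicontinuous log-concave functions such that 0 < ∫_{ℝⁿ} f dx < ∞ and g is compactly supported (and not identically 0). Then for Lebesgue-almost every x ∈ ℝⁿ, lim_{t→0⁺} ((f⋆(t·g))(x) − f(x))/t = h_g(∇φ(x)) f(x), where φ = −log f and the right-hand side is interpreted as 0 whenever f(x) = 0. -/

import Mathlib

open MeasureTheory Set Filter Topology Pointwise
open scoped ENNReal RealInnerProductSpace NNReal

noncomputable section

/-- Euclidean space ℝⁿ. -/
abbrev Euc (n : ℕ) := EuclideanSpace ℝ (Fin n)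

/-- A nonnegative function is log-concave if `f((1-λ)x+λy) ≥ f(x)^{1-λ} f(y)^λ`. -/
def LogConcaveFn {n : ℕ} (f : Euc n → ℝ) : Prop :=
  ∀ x y : Euc n, ∀ l : ℝ, 0 ≤ l → l ≤ 1 →
    f x ^ (1 - l) * f y ^ l ≤ f ((1 - l) • x + l • y)

/-- Sup-convolution `(f⋆g)(x) = sup_y f(y) g(x-y)`, valued in `[0,∞]`. -/
def supConv {n : ℕ} (f g : Euc n → ℝ) (x : Euc n) : ℝ≥0∞ :=
  ⨆ y : Euc n, ENNReal.ofReal (f y * g (x - y))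

/-- Dilation `(t·g)(x) = g(x/t)^t`. -/
def dil {n : ℕ} (t : ℝ) (g : Euc n → ℝ) (x : Euc n) : ℝ :=
  g (t⁻¹ • x) ^ t

/-- Total mass `∫ f` of a nonnegative function, in `[0,∞]`. -/
def totalMass {n : ℕ} (f : Euc n → ℝ) : ℝ≥0∞ := ∫⁻ x, ENNReal.ofReal (f x)

/-- The difference quotient `(∫ f⋆(t·g) − ∫ f)/t`, valued in `EReal`. -/
def deltaQuot {n : ℕ} (f g : Euc n → ℝ) (t : ℝ) : EReal :=
  ((t⁻¹ : ℝ) : EReal) *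
    (((∫⁻ x, supConv f (dil t g) x : ℝ≥0∞) : EReal) - ((totalMass f : ℝ≥0∞) : EReal))

/-- The support `K_f`: closure of `{x : f(x) > 0}`. -/
def spt {n : ℕ} (f : Euc n → ℝ) : Set (Euc n) := closure {x | 0 < f x}

/-- `φ = -log f`. -/
def mlog {n : ℕ} (f : Euc n → ℝ) (x : Euc n) : ℝ := -Real.log (f x)

/-- The measure `μ_f`: pushforward of `f dx` under the (a.e. defined) gradient of `φ = -log f`. -/
def muF {n : ℕ} (f : Euc n → ℝ) : Measure (Euc n) :=
  Measure.map (gradient (mlog f)) (volume.withDensity fun x => ENNReal.ofReal (f x))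

-- The outer unit normal (Gauss) map of a convex set `K`, defined (H^{n-1}-a.e. uniquely)
-- at boundary points; junk value `0` where no outer normal exists.
open Classical in
def gaussMap {n : ℕ} (K : Set (Euc n)) (x : Euc n) : Euc n :=
  if h : ∃ u : Euc n, ‖u‖ = 1 ∧ ∀ y ∈ K, ⟪y - x, u⟫ ≤ 0 then h.choose else 0

/-- The weighted boundary measure `f · H^{n-1}|_{∂K_f}`. -/
def bdryMeasure {n : ℕ} (f : Euc n → ℝ) : Measure (Euc n) :=
  ((μH[(n : ℝ) - 1] : Measure (Euc n)).restrict (frontier (spt f))).withDensity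
    (fun x => ENNReal.ofReal (f x))

/-- The measure `ν_f` on the sphere: pushforward of `f · H^{n-1}|_{∂K_f}` under the Gauss map. -/
def nuF {n : ℕ} (f : Euc n → ℝ) : Measure (Euc n) :=
  Measure.map (gaussMap (spt f)) (bdryMeasure f)

/-- Positive part of an extended real, in `[0,∞]`. -/
def epos (a : EReal) : ℝ≥0∞ := if a = ⊤ then ⊤ else ENNReal.ofReal a.toReal

/-- Integral of an `EReal`-valued function: positive part minus negative part. -/
def eInt {n : ℕ} (μ : Measure (Euc n)) (h : Euc n → EReal) : EReal :=
  ((∫⁻ x, epos (h x) ∂μ : ℝ≥0∞) : EReal) - ((∫⁻ x, epos (-(h x)) ∂μ : ℝ≥0∞) : EReal)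

/-- The support function `h_g = (-log g)^*` of a log-concave function, valued in `EReal`. -/
def hSupp {n : ℕ} (g : Euc n → ℝ) (x : Euc n) : EReal :=
  ⨆ y : Euc n, (((⟪x, y⟫ : ℝ) : EReal) +
    (if g y = 0 then (⊥ : EReal) else ((Real.log (g y) : ℝ) : EReal)))

/-- The support function of a set, valued in `EReal`. -/
def hSetE {n : ℕ} (K : Set (Euc n)) (x : Euc n) : EReal :=
  ⨆ y ∈ K, ((⟪y, x⟫ : ℝ) : EReal)

/-- The support function of a set, real-valued: `h_K(x) = sup_{y ∈ K} ⟨y, x⟩`. -/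
def hSetR {n : ℕ} (K : Set (Euc n)) (x : Euc n) : ℝ :=
  sSup ((fun y => ⟪y, x⟫) '' K)

/-- Divergence of a vector field: the trace of its derivative. -/
def dvg {n : ℕ} (Φ : Euc n → Euc n) (x : Euc n) : ℝ :=
  LinearMap.trace ℝ (Euc n) (fderiv ℝ Φ x : Euc n →ₗ[ℝ] Euc n)

/-- The anisotropic total variation `TV_L(f)`. -/
def TVL {n : ℕ} (L : Set (Euc n)) (f : Euc n → ℝ) : EReal :=
  ⨆ Φ : {Φ : Euc n → Euc n //
      ContDiff ℝ 1 Φ ∧ HasCompactSupport Φ ∧ ∀ x, gauge L (Φ x) ≤ 1},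
    ((∫ x, f x * dvg Φ.1 x : ℝ) : EReal)

/-- The anisotropic perimeter `Per_L(A) = TV_L(1_A)`. -/
def PerL {n : ℕ} (L : Set (Euc n)) (A : Set (Euc n)) : EReal :=
  TVL L (A.indicator fun _ => (1 : ℝ))

/-- The surface area measure `S_F` of a convex body: pushforward of `H^{n-1}|_{∂F}`
under the Gauss map. -/
def surfMeasure {n : ℕ} (F : Set (Euc n)) : Measure (Euc n) :=
  Measure.map (gaussMap F) ((μH[(n : ℝ) - 1] : Measure (Euc n)).restrict (frontier F))


theorem supConv_dil_le {n : ℕ} (f g : Euc n → ℝ) (x : Euc n) {t : ℝ} (ht : 0 < t) (B : ℝ)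
    (h : ∀ z, f (x - t • z) * g z ^ t ≤ B) :
    supConv f (dil t g) x ≤ ENNReal.ofReal B := by
  refine iSup_le fun y => ENNReal.ofReal_le_ofReal ?_
  have := h (t⁻¹ • (x - y))
  rw [smul_smul, mul_inv_cancel₀ ht.ne', one_smul, sub_sub_cancel] at this
  exact this

theorem le_supConv_dil {n : ℕ} (f g : Euc n → ℝ) (x : Euc n) {t : ℝ} (ht : 0 < t) (z : Euc n) :
    ENNReal.ofReal (f (x - t • z) * g z ^ t) ≤ supConv f (dil t g) x := by
  refine le_trans ?_ (le_iSup (fun y => ENNReal.ofReal (f y * dil t g (x - y))) (x - t • z))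
  simp only [dil, sub_sub_cancel, smul_smul, inv_mul_cancel₀ ht.ne', one_smul, le_refl]

theorem convex_pos {n : ℕ} {f : Euc n → ℝ} (hflc : LogConcaveFn f) :
    Convex ℝ {x | 0 < f x} := by
  intro x hx y hy a b ha hb hab
  have ha' : a = 1 - b := by linarith
  subst ha'
  have := hflc x y b hb (by linarith)
  exact lt_of_lt_of_le (mul_pos (Real.rpow_pos_of_pos hx _) (Real.rpow_pos_of_pos hy _)) this

theorem convexOn_mlog {n : ℕ} {f : Euc n → ℝ} (hflc : LogConcaveFn f) :
    ConvexOn ℝ {x | 0 < f x} (mlog f) := by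
  refine ⟨convex_pos hflc, ?_⟩
  intro x hx y hy a b ha hb hab
  have ha' : a = 1 - b := by linarith
  subst ha'
  have h1 := hflc x y b hb (by linarith)
  have hx' := Real.rpow_pos_of_pos hx (1 - b)
  have hy' := Real.rpow_pos_of_pos hy b
  have h2 := Real.log_le_log (mul_pos hx' hy') h1
  rw [Real.log_mul hx'.ne' hy'.ne', Real.log_rpow hx, Real.log_rpow hy] at h2
  simp only [mlog, smul_eq_mul]
  linarith

theorem ae_diff_mlog {n : ℕ} {f : Euc n → ℝ} (hflc : LogConcaveFn f) :
    ∀ᵐ x : Euc n, x ∈ interior {x | 0 < f x} → DifferentiableAt ℝ (mlog f) x := by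
  have hL := (convexOn_mlog hflc).locallyLipschitzOn_interior
  rw [ae_iff]
  refine measure_null_of_locally_null _ fun x hx => ?_
  simp only [Classical.not_imp, mem_ofPred_eq] at hx
  obtain ⟨K, u, hu, hKu⟩ := hL hx.1
  rw [isOpen_interior.nhdsWithin_eq hx.1] at hu
  have hV := hKu.mono (interior_subset (s := u))
  have := hV.ae_differentiableWithinAt_of_mem (μ := volume)
  rw [ae_iff] at this
  refine ⟨{a | ¬(a ∈ interior {x | 0 < f x} → DifferentiableAt ℝ (mlog f) a)} ∩ interior u,
    inter_mem_nhdsWithin _ (interior_mem_nhds.2 hu), measure_mono_null ?_ this⟩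
  rintro a ⟨ha, hau⟩
  simp only [Classical.not_imp, mem_ofPred_eq] at ha ⊢
  exact ⟨hau, fun h => ha.2 (h.differentiableAt (isOpen_interior.mem_nhds hau))⟩

theorem exists_bounds {n : ℕ} {g : Euc n → ℝ}
    (hgusc : UpperSemicontinuous g) (hgc : HasCompactSupport g) :
    ∃ R M : ℝ, 0 < R ∧ 0 < M ∧ ∀ z, g z ≠ 0 → ‖z‖ ≤ R ∧ g z ≤ M := by
  obtain ⟨R, hR⟩ := hgc.isCompact.isBounded.exists_norm_le
  obtain ⟨M, hM⟩ := (hgusc.upperSemicontinuousOn (tsupport g)).bddAbove_of_isCompact hgc.isCompact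
  refine ⟨max R 1, max M 1, by positivity, by positivity, fun z hz => ?_⟩
  have hz' : z ∈ tsupport g := subset_tsupport _ hz
  exact ⟨(hR z hz').trans (le_max_left _ _), (hM (mem_image_of_mem _ hz')).trans (le_max_left _ _)⟩

theorem hSupp_spec {n : ℕ} {g : Euc n → ℝ} (hg0 : ∀ x, 0 ≤ g x)
    (hgusc : UpperSemicontinuous g) (hgc : HasCompactSupport g) (hgne : ∃ x, g x ≠ 0) (v : Euc n) :
    (∀ z, g z ≠ 0 → ⟪v, z⟫ + Real.log (g z) ≤ (hSupp g v).toReal) ∧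
    ∀ e > 0, ∃ z, g z ≠ 0 ∧ (hSupp g v).toReal - e < ⟪v, z⟫ + Real.log (g z) := by
  obtain ⟨R, M, hR, hM, hb⟩ := exists_bounds hgusc hgc
  obtain ⟨z0, hz0⟩ := hgne
  have hle : ∀ z, g z ≠ 0 → ((⟪v, z⟫ + Real.log (g z) : ℝ) : EReal) ≤ hSupp g v := by
    intro z hz
    have := le_iSup (fun y : Euc n => (((⟪v, y⟫ : ℝ) : EReal) +
      (if g y = 0 then (⊥ : EReal) else ((Real.log (g y) : ℝ) : EReal)))) z
    simpa [hz, hSupp] using this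
  have hbot : hSupp g v ≠ ⊥ := fun h => by
    have := hle z0 hz0
    rw [h] at this
    simp only [le_bot_iff] at this
    exact EReal.coe_ne_bot _ this
  have htop : hSupp g v ≠ ⊤ := by
    have : hSupp g v ≤ ((‖v‖ * R + Real.log M : ℝ) : EReal) := by
      refine iSup_le fun y => ?_
      by_cases hy : g y = 0
      · simp [hy]
      · rw [if_neg hy, ← EReal.coe_add, EReal.coe_le_coe_iff]
        obtain ⟨h1, h2⟩ := hb y hy
        have h3 : 0 < g y := lt_of_le_of_ne (hg0 y) (Ne.symm hy)
        have h4 := Real.log_le_log h3 h2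
        have h5 := real_inner_le_norm v y
        have h6 := mul_le_mul_of_nonneg_left h1 (norm_nonneg v)
        linarith
    exact fun h => by rw [h, top_le_iff] at this; exact EReal.coe_ne_top _ this
  have hc := EReal.coe_toReal htop hbot
  refine ⟨fun z hz => ?_, fun e he => ?_⟩
  · have := hle z hz
    rw [← hc, EReal.coe_le_coe_iff] at this
    exact this
  · have : (((hSupp g v).toReal - e : ℝ) : EReal) < hSupp g v := by
      conv_rhs => rw [← hc]
      rw [EReal.coe_lt_coe_iff]; linarith
    obtain ⟨z, hz⟩ := lt_iSup_iff.1 this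
    by_cases h0 : g z = 0
    · simp [h0] at hz
    · rw [if_neg h0, ← EReal.coe_add, EReal.coe_lt_coe_iff] at hz
      exact ⟨z, h0, hz⟩

theorem tendsto_exp_quot (c a : ℝ) :
    Tendsto (fun t : ℝ => (c * Real.exp (t * a) - c) / t) (𝓝[>] (0 : ℝ)) (𝓝 (a * c)) := by
  have h : HasDerivAt (fun t : ℝ => c * Real.exp (t * a)) (a * c) 0 := by
    have h1 : HasDerivAt (fun t : ℝ => t * a) a 0 := by
      simpa using (hasDerivAt_id (0 : ℝ)).mul_const a
    have := (h1.exp).const_mul c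
    simpa [mul_comm] using this
  have := (hasDerivAt_iff_tendsto_slope.1 h).mono_left
    (nhdsWithin_mono (0 : ℝ) (fun t (ht : 0 < t) => ht.ne'))
  refine this.congr fun t => ?_
  simp [slope_def_field]

theorem interior_case {n : ℕ} {f g : Euc n → ℝ} (hf0 : ∀ x, 0 ≤ f x)
    (hg0 : ∀ x, 0 ≤ g x) (hgusc : UpperSemicontinuous g)
    (hgc : HasCompactSupport g) (hgne : ∃ x, g x ≠ 0) (x : Euc n)
    (hx : x ∈ interior {x | 0 < f x}) (hd : DifferentiableAt ℝ (mlog f) x) :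
    Tendsto (fun t : ℝ => ((supConv f (dil t g) x).toReal - f x) / t)
        (𝓝[>] (0 : ℝ)) (𝓝 ((hSupp g (gradient (mlog f) x)).toReal * f x)) := by
  have hfx : 0 < f x := (interior_subset hx : x ∈ {x | 0 < f x})
  obtain ⟨R, M, hR, hM, hb⟩ := exists_bounds hgusc hgc
  set v := gradient (mlog f) x with hv
  obtain ⟨hs1, hs2⟩ := hSupp_spec hg0 hgusc hgc hgne v
  set H := (hSupp g v).toReal with hH
  have hgrad : HasGradientAt (mlog f) v x := hd.hasGradientAt
  have hlo := hasGradientAt_iff_isLittleO_nhds_zero.1 hgrad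
  -- two-sided exponential bound
  have key : ∀ e > 0, ∀ᶠ t : ℝ in 𝓝[>] (0 : ℝ),
      f x * Real.exp (t * (H - e)) ≤ (supConv f (dil t g) x).toReal ∧
      (supConv f (dil t g) x).toReal ≤ f x * Real.exp (t * (H + e)) := by
    intro e he
    have hc : 0 < e / (2 * R) := by positivity
    have h1 := hlo.def hc
    have h2 : ∀ᶠ w : Euc n in 𝓝 0, 0 < f (x + w) := by
      have : Tendsto (fun w : Euc n => x + w) (𝓝 0) (𝓝 x) := by
        have : Continuous (fun w : Euc n => x + w) := by fun_prop
        simpa using this.tendsto 0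
      exact this.eventually (mem_interior_iff_mem_nhds.1 hx)
    obtain ⟨d, hdpos, hdd⟩ := Metric.eventually_nhds_iff.1 (h1.and h2)
    have hev : ∀ᶠ t : ℝ in 𝓝[>] (0 : ℝ), t < d / R :=
      mem_nhdsWithin_of_mem_nhds (Iio_mem_nhds (by positivity))
    filter_upwards [hev, self_mem_nhdsWithin] with t ht ht0
    have ht0 : 0 < t := ht0
    have htR : t * R < d := by rwa [lt_div_iff₀ hR] at ht
    -- expansion
    have hexp : ∀ z, g z ≠ 0 → ∃ r : ℝ, |r| ≤ t * (e / 2) ∧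
        f (x - t • z) * g z ^ t = f x * Real.exp (t * (⟪v, z⟫ + Real.log (g z)) + r) := by
      intro z hz
      have hgz : 0 < g z := lt_of_le_of_ne (hg0 z) (Ne.symm hz)
      have hnz := (hb z hz).1
      have hn : ‖-(t • z)‖ = t * ‖z‖ := by rw [norm_neg, norm_smul, Real.norm_of_nonneg ht0.le]
      have hn2 : t * ‖z‖ ≤ t * R := mul_le_mul_of_nonneg_left hnz ht0.le
      obtain ⟨h3, h4⟩ := hdd (y := -(t • z)) (by rw [dist_zero_right, hn]; linarith)
      rw [hn, inner_neg_right, inner_smul_right, Real.norm_eq_abs] at h3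
      rw [← sub_eq_add_neg] at h3 h4
      refine ⟨-(mlog f (x - t • z) - mlog f x - -(t * ⟪v, z⟫)), ?_, ?_⟩
      · rw [abs_neg]
        refine h3.trans ?_
        calc e / (2 * R) * (t * ‖z‖) ≤ e / (2 * R) * (t * R) := by gcongr
          _ = t * (e / 2) := by field_simp
      · rw [Real.rpow_def_of_pos hgz]
        conv_lhs => rw [← Real.exp_log h4]
        conv_rhs => rw [← Real.exp_log hfx]
        rw [← Real.exp_add, ← Real.exp_add]
        congr 1
        simp only [mlog]
        ring
    have hup : supConv f (dil t g) x ≤ ENNReal.ofReal (f x * Real.exp (t * (H + e))) := by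
      refine supConv_dil_le f g x ht0 _ fun z => ?_
      by_cases hz : g z = 0
      · rw [hz, Real.zero_rpow ht0.ne', mul_zero]; positivity
      · obtain ⟨r, hr, he2⟩ := hexp z hz
        rw [he2]
        gcongr
        have h5 := mul_le_mul_of_nonneg_left (hs1 z hz) ht0.le
        have h6 := (abs_le.1 hr).2
        nlinarith [mul_pos ht0 he]
    refine ⟨?_, ENNReal.toReal_le_of_le_ofReal (by positivity) hup⟩
    obtain ⟨z, hz, hz2⟩ := hs2 (e / 2) (by positivity)
    have hlow := le_supConv_dil f g x ht0 z
    have hfin : supConv f (dil t g) x ≠ ⊤ := ne_top_of_le_ne_top ENNReal.ofReal_ne_top hup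
    rw [ENNReal.ofReal_le_iff_le_toReal hfin] at hlow
    refine le_trans ?_ hlow
    obtain ⟨r, hr, he2⟩ := hexp z hz
    rw [he2]
    gcongr
    have h5 := mul_le_mul_of_nonneg_left hz2.le ht0.le
    have h6 := (abs_le.1 hr).1
    nlinarith [mul_pos ht0 he]
  rw [tendsto_order]
  constructor
  · intro a ha
    have he : 0 < (H * f x - a) / (2 * f x) := div_pos (by linarith) (by positivity)
    set e := (H * f x - a) / (2 * f x) with hedef
    have h2 : e * (2 * f x) = H * f x - a := by rw [hedef]; field_simp
    have hlim := (tendsto_exp_quot (f x) (H - e)).eventually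
      (lt_mem_nhds (show a < (H - e) * f x by nlinarith))
    filter_upwards [hlim, key e he, self_mem_nhdsWithin] with t h3 h4 ht0
    have ht0 : 0 < t := ht0
    refine h3.trans_le ?_
    gcongr
    exact h4.1
  · intro a ha
    have he : 0 < (a - H * f x) / (2 * f x) := div_pos (by linarith) (by positivity)
    set e := (a - H * f x) / (2 * f x) with hedef
    have h2 : e * (2 * f x) = a - H * f x := by rw [hedef]; field_simp
    have hlim := (tendsto_exp_quot (f x) (H + e)).eventually
      (gt_mem_nhds (show (H + e) * f x < a by nlinarith))
    filter_upwards [hlim, key e he, self_mem_nhdsWithin] with t h3 h4 ht0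
    have ht0 : 0 < t := ht0
    refine lt_of_le_of_lt ?_ h3
    gcongr
    exact h4.2

theorem exterior_case {n : ℕ} {f g : Euc n → ℝ} (hf0 : ∀ x, 0 ≤ f x)
    (hgusc : UpperSemicontinuous g)
    (hgc : HasCompactSupport g) (x : Euc n)
    (hx : x ∉ closure {x | 0 < f x}) (c : ℝ) :
    Tendsto (fun t : ℝ => ((supConv f (dil t g) x).toReal - f x) / t)
        (𝓝[>] (0 : ℝ)) (𝓝 (c * f x)) := by
  have hz : ∀ y, y ∉ closure {x | 0 < f x} → f y = 0 := fun y hy =>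
    le_antisymm (not_lt.1 fun h => hy (subset_closure h)) (hf0 y)
  obtain ⟨R, M, hR, hM, hb⟩ := exists_bounds hgusc hgc
  rw [hz x hx, mul_zero]
  obtain ⟨d, hdpos, hdd⟩ := Metric.eventually_nhds_iff.1
    (isClosed_closure.isOpen_compl.mem_nhds hx)
  have hev : ∀ᶠ t : ℝ in 𝓝[>] (0 : ℝ), t < d / R :=
    mem_nhdsWithin_of_mem_nhds (Iio_mem_nhds (by positivity))
  refine tendsto_const_nhds.congr' ?_
  filter_upwards [hev, self_mem_nhdsWithin] with t ht ht0
  have ht0 : 0 < t := ht0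
  have htR : t * R < d := by rwa [lt_div_iff₀ hR] at ht
  have : supConv f (dil t g) x ≤ ENNReal.ofReal 0 := by
    refine supConv_dil_le f g x ht0 _ fun z => ?_
    by_cases h0 : g z = 0
    · rw [h0, Real.zero_rpow ht0.ne', mul_zero]
    · have hn2 : t * ‖z‖ ≤ t * R := mul_le_mul_of_nonneg_left (hb z h0).1 ht0.le
      rw [hz (x - t • z), zero_mul]
      refine hdd ?_
      rw [dist_eq_norm, sub_sub_cancel_left, norm_neg, norm_smul, Real.norm_of_nonneg ht0.le]
      linarith
  rw [ENNReal.ofReal_zero, le_zero_iff] at this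
  simp [this]

/-- For `g` compactly supported (not identically 0), for a.e. `x`,
`lim_{t→0⁺} ((f⋆(t·g))(x) − f(x))/t = h_g(∇φ(x)) f(x)` with `φ = −log f`,
the right-hand side interpreted as `0` whenever `f(x) = 0`. -/
theorem pointwise_first_variation (n : ℕ) (f g : Euc n → ℝ)
    (hf0 : ∀ x, 0 ≤ f x) (hfusc : UpperSemicontinuous f) (hflc : LogConcaveFn f)
    (hfpos : 0 < totalMass f) (hffin : totalMass f < ⊤)
    (hg0 : ∀ x, 0 ≤ g x) (hgusc : UpperSemicontinuous g) (hglc : LogConcaveFn g)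
    (hgc : HasCompactSupport g) (hgne : ∃ x, g x ≠ 0) :
    ∀ᵐ x : Euc n ∂(volume : Measure (Euc n)),
      Tendsto (fun t : ℝ => ((supConv f (dil t g) x).toReal - f x) / t)
        (𝓝[>] (0 : ℝ)) (𝓝 ((hSupp g (gradient (mlog f) x)).toReal * f x)) := by
  have hfr : ∀ᵐ x : Euc n, x ∉ frontier {x | 0 < f x} := by
    rw [ae_iff]
    simpa using (convex_pos hflc).addHaar_frontier volume
  filter_upwards [hfr, ae_diff_mlog hflc] with x h1 h2
  by_cases hi : x ∈ interior {x | 0 < f x}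
  · exact interior_case hf0 hg0 hgusc hgc hgne x hi (h2 hi)
  · exact exterior_case hf0 hgusc hgc x (fun h => h1 ⟨h, hi⟩) _

end
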